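/- Let a = 1/2 and let Φ be the 4×3 real matrix with rows (a, a, a), (−a, a, −a), (−a, −a, a), (−a, a, a) (i.e., Φᵀ = [[a,−a,−a,−a],[a,a,−a,a],[a,−a,a,a]]). Then Φᵀ Φ = I₃, and for every 3-element subset S of {1,2,3,4} and every nonzero u ∈ ℤ³, ‖Φ_S u‖² ≥ 3/4, where Φ_S is the 3×3 matrix of rows of Φ indexed by S. Moreover for every such S there exists a nonzero u ∈ ℤ³ with ‖Φ_S u‖² = 3/4. -/

import Mathlib

open Matrix

/-- The `k × k` submatrix of `Φ` formed by the rows indexed by the `k`-element subset `S`. -/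
def rowsSub {n k : ℕ} (Φ : Matrix (Fin n) (Fin k) ℝ)
    (S : {s : Finset (Fin n) // s.card = k}) : Matrix (Fin k) (Fin k) ℝ :=
  fun i j => Φ ((S.1.orderIsoOfFin S.2 i : Fin n)) j

/-- Squared Euclidean norm of a vector in `ℝ^k`. -/
def sqnorm {k : ℕ} (x : Fin k → ℝ) : ℝ := ∑ i, x i ^ 2

theorem sqnorm_rowsSub {n k : ℕ} (Φ : Matrix (Fin n) (Fin k) ℝ)
    (S : {s : Finset (Fin n) // s.card = k}) (x : Fin k → ℝ) :
    sqnorm ((rowsSub Φ S).mulVec x) = ∑ i ∈ S.1, (Φ.mulVec x i) ^ 2 := by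
  rw [← Finset.sum_coe_sort]
  exact (S.1.orderIsoOfFin S.2).toEquiv.sum_comp (fun i : S.1 => (Φ.mulVec x (i : Fin n)) ^ 2)

theorem card_three_cases : ∀ s : Finset (Fin 4), s.card = 3 →
    s = {0, 1, 2} ∨ s = {0, 1, 3} ∨ s = {0, 2, 3} ∨ s = {1, 2, 3} := by
  decide

theorem three_le_sq (p q r : ℤ) (h1 : p % 2 = q % 2) (h2 : q % 2 = r % 2)
    (h : ¬ (p = 0 ∧ q = 0 ∧ r = 0)) : 3 ≤ p ^ 2 + q ^ 2 + r ^ 2 := by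
  have odd : ∀ t : ℤ, t ≠ 0 → 1 ≤ t ^ 2 := fun t ht => by
    have := sq_pos_of_ne_zero ht
    omega
  have even : ∀ t : ℤ, t % 2 = 0 → t ≠ 0 → 4 ≤ t ^ 2 := fun t h0 ht => by
    obtain ⟨m, rfl⟩ : ∃ m, t = 2 * m := ⟨t / 2, by omega⟩
    have := odd m (by omega)
    nlinarith
  have hp := sq_nonneg p
  have hq := sq_nonneg q
  have hr := sq_nonneg r
  rcases Int.emod_two_eq_zero_or_one p with h0 | h0
  · by_cases a : p = 0
    · by_cases b : q = 0
      · have := even r (by omega) (by tauto)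
        omega
      · have := even q (by omega) b
        omega
    · have := even p h0 a
      omega
  · have := odd p (by omega)
    have := odd q (by omega)
    have := odd r (by omega)
    omega

/-- The paper's `(4,3)` construction with `a = 1/2`: `Φ` has orthonormal columns,
every child lattice `Φ_S ℤ³` has squared shortest nonzero vector at least `3/4`,
and the value `3/4` is attained for every 3-subset `S`. -/
theorem four_three_construction :
    letI a : ℝ := 1 / 2
    letI Φ : Matrix (Fin 4) (Fin 3) ℝ := !![a, a, a; -a, a, -a; -a, -a, a; -a, a, a]
    Φᵀ * Φ = 1 ∧
    (∀ S : {s : Finset (Fin 4) // s.card = 3}, ∀ u : Fin 3 → ℤ, u ≠ 0 →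
      3 / 4 ≤ sqnorm ((rowsSub Φ S).mulVec fun j => (u j : ℝ))) ∧
    (∀ S : {s : Finset (Fin 4) // s.card = 3}, ∃ u : Fin 3 → ℤ, u ≠ 0 ∧
      sqnorm ((rowsSub Φ S).mulVec fun j => (u j : ℝ)) = 3 / 4) := by
  refine ⟨?_, ?_, ?_⟩
  · ext i j
    fin_cases i <;> fin_cases j <;>
      simp [Matrix.mul_apply, Fin.sum_univ_four] <;> norm_num
  · rintro ⟨s, hs⟩ u hu
    have hu' : ¬ (u 0 = 0 ∧ u 1 = 0 ∧ u 2 = 0) := fun h => hu (by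
      ext i
      fin_cases i
      exacts [h.1, h.2.1, h.2.2])
    rw [sqnorm_rowsSub]
    rcases card_three_cases s hs with rfl | rfl | rfl | rfl
    · have := three_le_sq (u 0 + u 1 + u 2) (-u 0 + u 1 - u 2) (-u 0 - u 1 + u 2)
        (by omega) (by omega) (by omega)
      have : (3 : ℝ) ≤ (u 0 + u 1 + u 2) ^ 2 + (-u 0 + u 1 - u 2) ^ 2
        + (-u 0 - u 1 + u 2) ^ 2 := by exact_mod_cast this
      simp [Matrix.mulVec, dotProduct, Fin.sum_univ_three]
      linarith
    · have := three_le_sq (u 0 + u 1 + u 2) (-u 0 + u 1 - u 2) (-u 0 + u 1 + u 2)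
        (by omega) (by omega) (by omega)
      have : (3 : ℝ) ≤ (u 0 + u 1 + u 2) ^ 2 + (-u 0 + u 1 - u 2) ^ 2
        + (-u 0 + u 1 + u 2) ^ 2 := by exact_mod_cast this
      simp [Matrix.mulVec, dotProduct, Fin.sum_univ_three]
      linarith
    · have := three_le_sq (u 0 + u 1 + u 2) (-u 0 - u 1 + u 2) (-u 0 + u 1 + u 2)
        (by omega) (by omega) (by omega)
      have : (3 : ℝ) ≤ (u 0 + u 1 + u 2) ^ 2 + (-u 0 - u 1 + u 2) ^ 2
        + (-u 0 + u 1 + u 2) ^ 2 := by exact_mod_cast this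
      simp [Matrix.mulVec, dotProduct, Fin.sum_univ_three]
      linarith
    · have := three_le_sq (-u 0 + u 1 - u 2) (-u 0 - u 1 + u 2) (-u 0 + u 1 + u 2)
        (by omega) (by omega) (by omega)
      have : (3 : ℝ) ≤ (-u 0 + u 1 - u 2) ^ 2 + (-u 0 - u 1 + u 2) ^ 2
        + (-u 0 + u 1 + u 2) ^ 2 := by exact_mod_cast this
      simp [Matrix.mulVec, dotProduct, Fin.sum_univ_three]
      linarith
  · rintro ⟨s, hs⟩
    refine ⟨![1, 0, 0], fun h => by simpa using congrFun h 0, ?_⟩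
    rw [sqnorm_rowsSub]
    rcases card_three_cases s hs with rfl | rfl | rfl | rfl <;>
      simp [Matrix.mulVec, dotProduct, Fin.sum_univ_three] <;> norm_num
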